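/- Let τ2 ≥ τ1 ≥ 0 and ρ > 0. The switched system ẋ(t) = f_{σ(t)}(x(t)) is uniformly exponentially stable with decay ρ (ρ-UES) on the class S_dw(τ1,τ2) if and only if it is ρ-UES on the class S*_dw(τ1,τ2). -/

import Mathlib

open Filter Set
open scoped Classical

noncomputable section

/-- A switching signal `σ : [0,∞) → {1,…,M}` (piecewise constant, right continuous),
encoded by the (possibly finite) strictly increasing sequence of its switching instants
`T 1 < T 2 < …` (the discontinuity points, with the convention `T 0 = 0`, and `num` the
extended-natural number of switching instants) together with the value `idx k ∈ Fin M`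
taken on the `k`-th inter-switching interval `[T k, T (k+1))`. Beyond the last switching
instant the time sequence is frozen, and if there are infinitely many switching instants
they tend to `+∞`. At each switching instant the value actually changes. -/
structure Signal (M : ℕ) where
  idx : ℕ → Fin M
  T : ℕ → ℝ
  num : ℕ∞
  T0 : T 0 = 0
  mono : ∀ k : ℕ, T k ≤ T (k + 1)
  strict : ∀ k : ℕ, (k : ℕ∞) < num → T k < T (k + 1)
  frozen : ∀ k : ℕ, num ≤ (k : ℕ∞) → T (k + 1) = T k
  change : ∀ k : ℕ, (k : ℕ∞) < num → idx k ≠ idx (k + 1)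
  unbounded : num = ⊤ → Tendsto T atTop atTop

/-- The index of the inter-switching interval containing time `t`. -/
def Signal.seg {M : ℕ} (s : Signal M) (t : ℝ) : ℕ :=
  sSup {k : ℕ | (k : ℕ∞) ≤ s.num ∧ s.T k ≤ t}

/-- Given the flow maps `Φ i` of the subsystems, the state of the switched system at the
`k`-th switching instant, starting from `x` at time `0`. -/
def Signal.state {M : ℕ} {E : Type*} (Φ : Fin M → ℝ → E → E) (s : Signal M) (x : E) : ℕ → E
  | 0 => x
  | k + 1 =>
    if (k : ℕ∞) < s.num then
      Φ (s.idx k) (s.T (k + 1) - s.T k) (Signal.state Φ s x k)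
    else Signal.state Φ s x k

/-- The solution `Φ_σ(t,x)` of the switched system associated to the flow maps `Φ i` of the
subsystems, for the switching signal `s`, starting at `x` (at time `0`), evaluated at time `t`. -/
def Signal.sol {M : ℕ} {E : Type*} (Φ : Fin M → ℝ → E → E) (s : Signal M) (t : ℝ) (x : E) : E :=
  Φ (s.idx (s.seg t)) (t - s.T (s.seg t)) (Signal.state Φ s x (s.seg t))

/-- The class `S_dw(τ1,τ2)`: switching signals with `τ1 ≤ t_k − t_{k−1} ≤ τ2` for every
switching instant `t_k > 0`. -/
def Sdw (M : ℕ) (τ1 τ2 : ℝ) : Set (Signal M) :=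
  {s | ∀ k : ℕ, (k : ℕ∞) < s.num →
    τ1 ≤ s.T (k + 1) - s.T k ∧ s.T (k + 1) - s.T k ≤ τ2}

/-- The class `S*_dw(τ1,τ2)`: switching signals with `τ1 ≤ t_{k+1} − t_k ≤ τ2` for every
switching instant `t_k > 0`, and with `t_1 ≤ τ2`. -/
def SdwStar (M : ℕ) (τ1 τ2 : ℝ) : Set (Signal M) :=
  {s | (∀ k : ℕ, 1 ≤ k → (k : ℕ∞) < s.num →
      τ1 ≤ s.T (k + 1) - s.T k ∧ s.T (k + 1) - s.T k ≤ τ2) ∧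
    (1 ≤ s.num → s.T 1 ≤ τ2)}

/-- A function `α : [0,∞) → [0,∞)` of class `K∞`: continuous, vanishing at `0`,
strictly increasing and unbounded. -/
def ClassKInf (α : ℝ → ℝ) : Prop :=
  ContinuousOn α (Ici 0) ∧ α 0 = 0 ∧ StrictMonoOn α (Ici 0) ∧
    Tendsto α atTop atTop ∧ ∀ r ∈ Ici (0 : ℝ), 0 ≤ α r

/-- A function `β : [0,∞) × [0,∞) → [0,∞)` of class `KL`. -/
def ClassKL (β : ℝ → ℝ → ℝ) : Prop :=
  ContinuousOn (Function.uncurry β) (Ici 0 ×ˢ Ici 0) ∧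
  (∀ s ∈ Ici (0 : ℝ), β 0 s = 0 ∧ StrictMonoOn (fun r => β r s) (Ici 0)) ∧
  (∀ r ∈ Ici (0 : ℝ), AntitoneOn (β r) (Ici 0) ∧ Tendsto (β r) atTop (nhds 0)) ∧
  (∀ r ∈ Ici (0 : ℝ), ∀ s ∈ Ici (0 : ℝ), 0 ≤ β r s)

/-- Global uniform asymptotic stability (GUAS) of the switched system with subsystem flows
`Φ i` over the class `S` of switching signals. -/
def GUAS {M : ℕ} {E : Type*} [NormedAddCommGroup E] (Φ : Fin M → ℝ → E → E)
    (S : Set (Signal M)) : Prop :=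
  ∃ β : ℝ → ℝ → ℝ, ClassKL β ∧
    ∀ s ∈ S, ∀ x : E, ∀ t ≥ (0 : ℝ), ‖Signal.sol Φ s t x‖ ≤ β ‖x‖ t

/-- Uniform exponential stability with decay `ρ` (`ρ`-UES) of the switched system with
subsystem flows `Φ i` over the class `S` of switching signals. -/
def UES {M : ℕ} {E : Type*} [NormedAddCommGroup E] (ρ : ℝ) (Φ : Fin M → ℝ → E → E)
    (S : Set (Signal M)) : Prop :=
  ∃ C : ℝ, 0 ≤ C ∧ ∀ s ∈ S, ∀ x : E, ∀ t ≥ (0 : ℝ),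
    ‖Signal.sol Φ s t x‖ ≤ C * Real.exp (-ρ * t) * ‖x‖

/-!
A signal in `S*_dw(τ1,τ2)` differs from one in `S_dw(τ1,τ2)` only in that its first interval may be
shorter than `τ1`. After its first switching instant it continues as a signal in `S_dw(τ1,τ2)`, so
that the `ρ`-UES bound applies there. During the first interval it follows a single subsystem, whose
flow satisfies the same bound because a constant signal, having no switching instant, belongs to
`S_dw(τ1,τ2)`. Composing the two bounds costs a factor `C`, and the exponentials multiply to
`exp (-ρ t)`.
-/

namespace Signal

section Segment

variable {M : ℕ} (s : Signal M)

lemma monotone_T : Monotone s.T := monotone_nat_of_le_succ s.mono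

lemma T_nonneg (k : ℕ) : 0 ≤ s.T k := s.T0.symm.trans_le (s.monotone_T k.zero_le)

lemma bddAbove_setOf_T_le (t : ℝ) : BddAbove {k : ℕ | (k : ℕ∞) ≤ s.num ∧ s.T k ≤ t} := by
  by_cases hnum : s.num = ⊤
  · obtain ⟨N, hN⟩ := ((s.unbounded hnum).eventually_gt_atTop t).exists
    exact ⟨N, fun k hk => (s.monotone_T.reflect_lt (hk.2.trans_lt hN)).le⟩
  · lift s.num to ℕ using hnum with m
    exact ⟨m, fun k hk => Nat.cast_le.1 hk.1⟩

lemma isGreatest_seg {t : ℝ} (ht : 0 ≤ t) :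
    IsGreatest {k : ℕ | (k : ℕ∞) ≤ s.num ∧ s.T k ≤ t} (s.seg t) :=
  have hbdd := s.bddAbove_setOf_T_le t
  ⟨Nat.sSup_mem ⟨0, by simp, s.T0.trans_le ht⟩ hbdd, fun _ hk => le_csSup hbdd hk⟩

lemma seg_eq_zero {t : ℝ} (ht₀ : 0 ≤ t) (ht : 1 ≤ s.num → t < s.T 1) : s.seg t = 0 := by
  obtain ⟨hnum, hT⟩ := (s.isGreatest_seg ht₀).1
  by_contra hseg
  have hone : 1 ≤ s.seg t := Nat.one_le_iff_ne_zero.2 hseg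
  have hlt : t < s.T 1 := ht ((Nat.one_le_cast.2 hone).trans hnum)
  exact (hlt.trans_le (s.monotone_T hone)).not_ge hT

lemma sol_of_lt_T_one {E : Type*} (Φ : Fin M → ℝ → E → E) (x : E) {t : ℝ} (ht₀ : 0 ≤ t)
    (ht : 1 ≤ s.num → t < s.T 1) : s.sol Φ t x = Φ (s.idx 0) t x := by
  simp only [sol, s.seg_eq_zero ht₀ ht, s.T0, sub_zero, state]

end Segment

/-- The constant signal with value `i`: it has no switching instants. -/
@[simps]
def const {M : ℕ} (i : Fin M) : Signal M where
  idx _ := i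
  T _ := 0
  num := 0
  T0 := rfl
  mono _ := le_rfl
  strict _ hk := absurd hk not_lt_zero
  frozen _ _ := rfl
  change _ hk := absurd hk not_lt_zero
  unbounded h := absurd h ENat.zero_ne_top

lemma sol_const {M : ℕ} {E : Type*} (Φ : Fin M → ℝ → E → E) (i : Fin M) (x : E) {t : ℝ}
    (ht : 0 ≤ t) : (const i).sol Φ t x = Φ i t x :=
  (const i).sol_of_lt_T_one Φ x ht fun h => by simp at h

section Tail

variable {M : ℕ} (s : Signal M)

/-- The signal seen from its first switching instant on, with time restarted at `0` there. A signal
without switching instants has a constant tail, whose value `s.idx 1` is unrelated to `s`. -/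
@[simps]
def tail : Signal M where
  idx k := s.idx (k + 1)
  T k := s.T (k + 1) - s.T 1
  num := s.num - 1
  T0 := sub_self _
  mono k := sub_le_sub_right (s.mono (k + 1)) _
  strict k hk := sub_lt_sub_right (s.strict (k + 1) (lt_tsub_iff_right.1 hk)) _
  frozen k hk := congrArg (· - s.T 1) (s.frozen (k + 1) (tsub_le_iff_right.1 hk))
  change k hk := s.change (k + 1) (lt_tsub_iff_right.1 hk)
  unbounded h := tendsto_atTop_add_const_right _ _
    ((tendsto_add_atTop_iff_nat 1).2 (s.unbounded (ENat.sub_eq_top_iff.1 h).1))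

lemma lt_num_tail {k : ℕ} : (k : ℕ∞) < s.tail.num ↔ ((k + 1 : ℕ) : ℕ∞) < s.num :=
  lt_tsub_iff_right

variable {s}

lemma le_num_tail (hs : 1 ≤ s.num) {k : ℕ} :
    (k : ℕ∞) ≤ s.tail.num ↔ ((k + 1 : ℕ) : ℕ∞) ≤ s.num :=
  (ENat.addLECancellable_of_ne_top ENat.one_ne_top).le_tsub_iff_right hs

lemma seg_eq_seg_tail_add_one (hs : 1 ≤ s.num) {t : ℝ} (ht : s.T 1 ≤ t) :
    s.seg t = s.tail.seg (t - s.T 1) + 1 := by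
  obtain ⟨⟨hnum, hT⟩, hmax⟩ := s.tail.isGreatest_seg (sub_nonneg.2 ht)
  refine IsGreatest.csSup_eq ⟨⟨(le_num_tail hs).1 hnum, (sub_le_sub_iff_right _).1 hT⟩, ?_⟩
  rintro (_ | k) ⟨hknum, hkT⟩
  · exact Nat.zero_le _
  · exact Nat.succ_le_succ (hmax ⟨(le_num_tail hs).2 hknum, sub_le_sub_right hkT _⟩)

variable {E : Type*} (Φ : Fin M → ℝ → E → E)

lemma state_succ_eq_state_tail (hs : 1 ≤ s.num) (x : E) (k : ℕ) :
    s.state Φ x (k + 1) = s.tail.state Φ (Φ (s.idx 0) (s.T 1) x) k := by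
  induction k with
  | zero =>
    have hpos : ((0 : ℕ) : ℕ∞) < s.num := zero_lt_one.trans_le hs
    simp only [state, if_pos hpos, zero_add, s.T0, sub_zero]
  | succ k ih =>
    rw [state, ih, state]
    simp only [lt_num_tail, tail_idx, tail_T, sub_sub_sub_cancel_right]

lemma sol_eq_sol_tail (hs : 1 ≤ s.num) (x : E) {t : ℝ} (ht : s.T 1 ≤ t) :
    s.sol Φ t x = s.tail.sol Φ (t - s.T 1) (Φ (s.idx 0) (s.T 1) x) := by
  simp only [sol, seg_eq_seg_tail_add_one hs ht, state_succ_eq_state_tail Φ hs, tail_idx, tail_T,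
    sub_sub_sub_cancel_right]

end Tail

end Signal

section DwellTime

variable {M : ℕ} {τ1 τ2 : ℝ}

lemma const_mem_Sdw (i : Fin M) : Signal.const i ∈ Sdw M τ1 τ2 :=
  fun _ hk => absurd hk not_lt_zero

lemma Sdw_subset_SdwStar : Sdw M τ1 τ2 ⊆ SdwStar M τ1 τ2 := fun s hs =>
  ⟨fun k _ hk => hs k hk, fun hone => by simpa [s.T0] using (hs 0 (zero_lt_one.trans_le hone)).2⟩

lemma tail_mem_Sdw {s : Signal M} (hs : s ∈ SdwStar M τ1 τ2) : s.tail ∈ Sdw M τ1 τ2 :=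
  fun k hk => by simpa using hs.1 (k + 1) (Nat.le_add_left 1 k) (s.lt_num_tail.1 hk)

end DwellTime

section UES

variable {M : ℕ} {E : Type*} [NormedAddCommGroup E] {ρ : ℝ} {Φ : Fin M → ℝ → E → E}
  {S S' : Set (Signal M)}

lemma UES.mono (h : UES ρ Φ S) (hS : S' ⊆ S) : UES ρ Φ S' :=
  let ⟨C, hC, hbound⟩ := h
  ⟨C, hC, fun s hs => hbound s (hS hs)⟩

theorem UES.of_tail_mem (h : UES ρ Φ S) (hconst : ∀ i, Signal.const i ∈ S)
    (htail : ∀ s ∈ S', s.tail ∈ S) : UES ρ Φ S' := by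
  obtain ⟨C, hC, hbound⟩ := h
  have hflow (i : Fin M) (x : E) {t : ℝ} (ht : 0 ≤ t) :
      ‖Φ i t x‖ ≤ C * Real.exp (-ρ * t) * ‖x‖ :=
    Signal.sol_const Φ i x ht ▸ hbound _ (hconst i) x t ht
  refine ⟨max C (C * C), le_max_of_le_left hC, fun s hs x t ht => ?_⟩
  by_cases hswitch : 1 ≤ s.num ∧ s.T 1 ≤ t
  · obtain ⟨hnum, hT⟩ := hswitch
    have hexp : Real.exp (-ρ * (t - s.T 1)) * Real.exp (-ρ * s.T 1) = Real.exp (-ρ * t) := by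
      rw [← Real.exp_add]
      ring_nf
    calc ‖s.sol Φ t x‖
        = ‖s.tail.sol Φ (t - s.T 1) (Φ (s.idx 0) (s.T 1) x)‖ := by
          rw [Signal.sol_eq_sol_tail Φ hnum x hT]
      _ ≤ C * Real.exp (-ρ * (t - s.T 1)) * ‖Φ (s.idx 0) (s.T 1) x‖ :=
          hbound _ (htail s hs) _ _ (sub_nonneg.2 hT)
      _ ≤ C * Real.exp (-ρ * (t - s.T 1)) * (C * Real.exp (-ρ * s.T 1) * ‖x‖) := by
          gcongr
          exact hflow _ x (s.T_nonneg 1)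
      _ = C * C * Real.exp (-ρ * t) * ‖x‖ := by
          rw [← hexp]
          ring
      _ ≤ max C (C * C) * Real.exp (-ρ * t) * ‖x‖ := by
          gcongr
          exact le_max_right _ _
  · rw [s.sol_of_lt_T_one Φ x ht fun hnum => not_le.1 fun hT => hswitch ⟨hnum, hT⟩]
    refine (hflow _ x ht).trans ?_
    gcongr
    exact le_max_left _ _

end UES

theorem ues_Sdw_iff_ues_SdwStar_general {M : ℕ} {E : Type*} [NormedAddCommGroup E]
    (ρ : ℝ) (Φ : Fin M → ℝ → E → E) (τ1 τ2 : ℝ) :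
    UES ρ Φ (Sdw M τ1 τ2) ↔ UES ρ Φ (SdwStar M τ1 τ2) :=
  ⟨fun h => h.of_tail_mem const_mem_Sdw fun _ => tail_mem_Sdw, fun h => h.mono Sdw_subset_SdwStar⟩

/-- Lemma 1, exponential case: for `τ2 ≥ τ1 ≥ 0` and `ρ > 0`, the
switched system is `ρ`-UES on `S_dw(τ1,τ2)` if and only if it is `ρ`-UES on `S*_dw(τ1,τ2)`. -/
theorem ues_Sdw_iff_ues_SdwStar {n M : ℕ}
    (f : Fin M → EuclideanSpace ℝ (Fin n) → EuclideanSpace ℝ (Fin n))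
    (Φ : Fin M → ℝ → EuclideanSpace ℝ (Fin n) → EuclideanSpace ℝ (Fin n))
    (hlip : ∀ i, LocallyLipschitz (f i))
    (hf0 : ∀ i, f i 0 = 0)
    (hΦ0 : ∀ i x, Φ i 0 x = x)
    (hode : ∀ i x t, HasDerivAt (fun τ => Φ i τ x) (f i (Φ i t x)) t)
    (huniq : ∀ i (γ : ℝ → EuclideanSpace ℝ (Fin n)),
        (∀ t, HasDerivAt γ (f i (γ t)) t) → ∀ t, γ t = Φ i t (γ 0))
    (τ1 τ2 : ℝ) (hτ1 : 0 ≤ τ1) (hτ12 : τ1 ≤ τ2) (ρ : ℝ) (hρ : 0 < ρ) :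
    UES ρ Φ (Sdw M τ1 τ2) ↔ UES ρ Φ (SdwStar M τ1 τ2) :=
  ues_Sdw_iff_ues_SdwStar_general ρ Φ τ1 τ2
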